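/- Let η ∈ (0,1) and α > 1 be constants, set ξ := (1 − 1/α)/10, let h be a constant with 4ξ < h ≤ 1/α + 3ξ, set L := (h + 2ξ)/(2ξ) and c := 1/(L + 1), and let p : ℕ → ℝ satisfy 0 < p(n) ≤ 1 − η and log(1/p(n))/log n → 0. Then c^L · (q(h)·(n·p(n))^{−6ξ})^{2L} / (n·p(n))^{h+ξ} → ∞ as n → ∞, where b := 1/(1 − p(n)), log_b(np) := log(n·p(n))/log b, β(h) := α·ξ·n·(np)^{−h}/(10·log_b(np)), and q(h) := β(h)/(log n)². -/

import Mathlib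

/-!
Since `log (1 / (1 - p)) ≥ p` and `log (np) ≤ log n`, the quantity `q(h)` is at least a constant
times `(np)^(1 - h) / (log n)^3`. As `1 - h - 6ξ ≥ ξ`, the base `q(h) (np)^(-6ξ)` is at least a
constant times `(np)^ξ / (log n)^3`, and `L` is chosen so that raising this to the power `2L` gives
`(np)^(h + 2ξ)` up to logarithms. This beats `(np)^(h + ξ)` by a factor `(np)^ξ / (log n)^(6L)`,
which tends to infinity as soon as `np` is at least a fixed positive power of `n`.
-/

open Filter

/-- `log_b(np)` with `b = 1/(1-p)`. -/
noncomputable def logbNP (n : ℕ) (p : ℝ) : ℝ :=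
  Real.log (n * p) / Real.log (1 / (1 - p))

/-- `β(h) = α·ξ·n·(np)^{-h} / (10·log_b(np))`. -/
noncomputable def betaKS (α ξ h : ℝ) (n : ℕ) (p : ℝ) : ℝ :=
  α * ξ * n * ((n : ℝ) * p) ^ (-h) / (10 * logbNP n p)

/-- `q(h) = β(h)/(log n)²`. -/
noncomputable def qKS (α ξ h : ℝ) (n : ℕ) (p : ℝ) : ℝ :=
  betaKS α ξ h n p / (Real.log n) ^ 2

theorem le_log_one_div_one_sub {r : ℝ} (hr : r < 1) : r ≤ Real.log (1 / (1 - r)) := by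
  have hpos : 0 < 1 / (1 - r) := one_div_pos.2 (sub_pos.2 hr)
  simpa using Real.one_sub_inv_le_log_of_pos hpos

theorem tendsto_rpow_div_log_rpow_atTop {s : ℝ} (hs : 0 < s) (t : ℝ) :
    Tendsto (fun x : ℝ => x ^ s / Real.log x ^ t) atTop atTop := by
  refine ((tendsto_exp_mul_div_rpow_atTop t s hs).comp Real.tendsto_log_atTop).congr' ?_
  filter_upwards [eventually_gt_atTop 0] with x hx
  rw [Function.comp_apply, Real.rpow_def_of_pos hx, mul_comm s]

theorem tendsto_rpow_div_log_rpow_of_rpow_le {δ s : ℝ} (hδ : 0 < δ) (hs : 0 < s) (t : ℝ)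
    {u : ℕ → ℝ} (hu : ∀ᶠ n : ℕ in atTop, (n : ℝ) ^ δ ≤ u n) :
    Tendsto (fun n : ℕ => u n ^ s / Real.log n ^ t) atTop atTop := by
  refine tendsto_atTop_mono' _ ?_
    ((tendsto_rpow_div_log_rpow_atTop (mul_pos hδ hs) t).comp tendsto_natCast_atTop_atTop)
  filter_upwards [hu] with n hn
  rw [Function.comp_apply, Real.rpow_mul n.cast_nonneg]
  gcongr

theorem eventually_rpow_le_mul_of_tendsto_log_div {p : ℕ → ℝ} (hp : ∀ᶠ n in atTop, 0 < p n)
    (hlim : Tendsto (fun n => Real.log (1 / p n) / Real.log n) atTop (nhds 0))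
    {δ : ℝ} (hδ : δ < 1) : ∀ᶠ n : ℕ in atTop, (n : ℝ) ^ δ ≤ n * p n := by
  filter_upwards [hp, hlim.eventually_lt_const (sub_pos.2 hδ), eventually_gt_atTop 1]
    with n hpn hratio hn
  have hn0 : (0 : ℝ) < n := by positivity
  have hlog : 0 < Real.log n := Real.log_pos (by exact_mod_cast hn)
  rw [div_lt_iff₀ hlog, one_div, Real.log_inv] at hratio
  rw [← Real.log_le_log_iff (by positivity) (by positivity), Real.log_rpow hn0,
    Real.log_mul hn0.ne' hpn.ne']
  linarith

theorem rpow_sub_div_rpow_le_rpow_div_rpow {K x ℓ y s t : ℝ} {m : ℕ} (hK : 0 ≤ K) (hx : 0 < x)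
    (hℓ : 0 ≤ ℓ) (ht : 0 ≤ t) (hy : K * x ^ s / ℓ ^ m ≤ y) (u : ℝ) :
    K ^ t * (x ^ (s * t - u) / ℓ ^ (m * t)) ≤ y ^ t / x ^ u :=
  calc K ^ t * (x ^ (s * t - u) / ℓ ^ (m * t))
      = (K * x ^ s / ℓ ^ m) ^ t / x ^ u := by
        rw [Real.div_rpow (by positivity) (by positivity), Real.mul_rpow hK (by positivity),
          ← Real.rpow_mul hx.le, Real.rpow_sub hx, Real.rpow_mul hℓ, Real.rpow_natCast]
        ring
    _ ≤ y ^ t / x ^ u := by gcongr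

section LowerBound

variable {α ξ h r : ℝ} {n : ℕ}

theorem rpow_one_sub_div_log_pow_le_qKS (hαξ : 0 ≤ α * ξ) (hr1 : r < 1) (hnr : 1 < n * r) :
    α * ξ / 10 * (n * r) ^ (1 - h) / Real.log n ^ 3 ≤ qKS α ξ h n r := by
  have hnr0 : 0 < n * r := one_pos.trans hnr
  have hr0 : 0 < r := pos_of_mul_pos_right hnr0 n.cast_nonneg
  have hlog_nr : 0 < Real.log (n * r) := Real.log_pos hnr
  have hlog_le : Real.log (n * r) ≤ Real.log n :=
    Real.log_le_log hnr0 (mul_le_of_le_one_right n.cast_nonneg hr1.le)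
  have hlog_n : 0 < Real.log n := hlog_nr.trans_le hlog_le
  calc α * ξ / 10 * (n * r) ^ (1 - h) / Real.log n ^ 3
      = α * ξ / 10 * (n * r * (n * r) ^ (-h)) / (Real.log n * Real.log n ^ 2) := by
        rw [sub_eq_add_neg, Real.rpow_add hnr0, Real.rpow_one, pow_succ' _ 2]
    _ ≤ α * ξ / 10 * (n * Real.log (1 / (1 - r)) * (n * r) ^ (-h)) /
          (Real.log (n * r) * Real.log n ^ 2) := by
        have := hr0.trans_le (le_log_one_div_one_sub hr1)
        gcongr
        exact le_log_one_div_one_sub hr1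
    _ = qKS α ξ h n r := by
        simp only [qKS, betaKS, logbNP]
        field_simp

theorem rpow_div_log_pow_le_qKS_mul_rpow (hαξ : 0 ≤ α * ξ) (hr1 : r < 1) (hnr : 1 < n * r)
    {s k : ℝ} (hs : s ≤ 1 - h - k) :
    α * ξ / 10 * (n * r) ^ s / Real.log n ^ 3 ≤ qKS α ξ h n r * (n * r) ^ (-k) := by
  have hnr0 : 0 < n * r := one_pos.trans hnr
  calc α * ξ / 10 * (n * r) ^ s / Real.log n ^ 3
      ≤ α * ξ / 10 * (n * r) ^ (1 - h - k) / Real.log n ^ 3 := by gcongr; exact hnr.le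
    _ = α * ξ / 10 * (n * r) ^ (1 - h) / Real.log n ^ 3 * (n * r) ^ (-k) := by
        rw [sub_eq_add_neg _ k, Real.rpow_add hnr0]
        ring
    _ ≤ qKS α ξ h n r * (n * r) ^ (-k) := by
        gcongr
        exact rpow_one_sub_div_log_pow_le_qKS hαξ hr1 hnr

end LowerBound

theorem color_arranging_final_asymptotics_general
    (α : ℝ) (hα : 1 < α) (ξ : ℝ) (hξ : ξ = (1 - 1 / α) / 10)
    (h : ℝ) (hh1 : -(2 * ξ) ≤ h) (hh2 : h ≤ 1 / α + 3 * ξ)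
    (L : ℝ) (hL : L = (h + 2 * ξ) / (2 * ξ)) (c : ℝ) (hc : c = 1 / (L + 1))
    (p : ℕ → ℝ) (hp1 : ∀ᶠ n in atTop, p n < 1)
    (δ : ℝ) (hδ : 0 < δ) (hnp : ∀ᶠ n : ℕ in atTop, (n : ℝ) ^ δ ≤ n * p n) :
    Tendsto (fun n : ℕ =>
        c ^ L * (qKS α ξ h n (p n) * ((n : ℝ) * p n) ^ (-(6 * ξ))) ^ (2 * L) /
          ((n : ℝ) * p n) ^ (h + ξ))
      atTop atTop := by
  have hξ0 : 0 < ξ := by linarith [(div_lt_one (one_pos.trans hα)).2 hα]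
  have hL0 : 0 ≤ L := hL ▸ div_nonneg (by linarith) (by linarith)
  have hc0 : 0 < c := hc ▸ by positivity
  have hbase_exp : ξ ≤ 1 - h - 6 * ξ := by linarith
  have hexcess : ξ * (2 * L) - (h + ξ) = ξ := by rw [hL]; field_simp; ring
  have hαξ : 0 < α * ξ := mul_pos (one_pos.trans hα) hξ0
  have hconst : 0 < α * ξ / 10 := by positivity
  have hgrowth := (tendsto_rpow_div_log_rpow_of_rpow_le hδ hξ0 (3 * (2 * L)) hnp).const_mul_atTop
    (Real.rpow_pos_of_pos hconst (2 * L))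
  simp only [mul_div_assoc]
  refine (tendsto_atTop_mono' _ ?_ hgrowth).const_mul_atTop (by positivity)
  filter_upwards [hp1, hnp, eventually_gt_atTop 1] with n hpn1 hnpn hn
  have hnp1 : 1 < n * p n := (Real.one_lt_rpow (by exact_mod_cast hn) hδ).trans_le hnpn
  have hbase := rpow_div_log_pow_le_qKS_mul_rpow hαξ.le hpn1 hnp1 hbase_exp
  have hpower := rpow_sub_div_rpow_le_rpow_div_rpow hconst.le (one_pos.trans hnp1)
    (Real.log_natCast_nonneg n) (mul_nonneg zero_le_two hL0) hbase (h + ξ)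
  rwa [hexcess, Nat.cast_ofNat] at hpower

/-- the concluding asymptotics in the proof of Lemma 6,
`l:color`, of Keusch–Steger. With `L = (h+2ξ)/(2ξ)` and `c = 1/(L+1)`,
`c^L · (q(h)·(np)^{-6ξ})^{2L} ≫ (np)^{h+ξ}`. -/
theorem color_arranging_final_asymptotics
    (η : ℝ) (hη0 : 0 < η) (hη1 : η < 1)
    (α : ℝ) (hα : 1 < α) (ξ : ℝ) (hξ : ξ = (1 - 1 / α) / 10)
    (h : ℝ) (hh1 : 4 * ξ < h) (hh2 : h ≤ 1 / α + 3 * ξ)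
    (L : ℝ) (hL : L = (h + 2 * ξ) / (2 * ξ)) (c : ℝ) (hc : c = 1 / (L + 1))
    (p : ℕ → ℝ) (hp0 : ∀ n, 0 < p n) (hp1 : ∀ n, p n ≤ 1 - η)
    (hpbig : Tendsto (fun n => Real.log (1 / p n) / Real.log n) atTop (nhds 0)) :
    Tendsto (fun n : ℕ =>
        c ^ L * (qKS α ξ h n (p n) * ((n : ℝ) * p n) ^ (-(6 * ξ))) ^ (2 * L) /
          ((n : ℝ) * p n) ^ (h + ξ))
      atTop atTop := by
  have hξ0 : 0 < ξ := by linarith [(div_lt_one (one_pos.trans hα)).2 hα]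
  exact color_arranging_final_asymptotics_general α hα ξ hξ h (by linarith) hh2 L hL c hc p
    (.of_forall fun n => (hp1 n).trans_lt (by linarith)) (1 / 2) (by norm_num)
    (eventually_rpow_le_mul_of_tendsto_log_div (.of_forall hp0) hpbig (by norm_num))
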